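/- arXiv:math/0703035 — 5 statements merged into one kernel-verified Lean document; each statement's English description precedes it below -/
import Mathlib

section
/- Let K be a field, R = K[x_1, …, x_n], and G a finite group acting on R by K-algebra automorphisms, with char K not dividing |G|. Let S ⊆ R^G be a set of invariant polynomials. Then the contraction of the R-ideal generated by S to the invariant ring equals the R^G-ideal generated by S: ⟨S⟩_R ∩ R^G = ⟨S⟩_{R^G}, i.e., every invariant polynomial b lying in the ideal of R generated by S can be written as b = Σ_i r_i q_i with r_i ∈ R^G and q_i ∈ S. -/
open MvPolynomial

/-- The invariant ring `R^G = {r ∈ R : g.r = r for all g ∈ G}`, as a `K`-subalgebra of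
the polynomial ring `R = K[x_1, …, x_n]`. -/
def invariants {n : ℕ} {K : Type*} [Field K] {G : Type*} [Group G]
    (φ : G →* (MvPolynomial (Fin n) K ≃ₐ[K] MvPolynomial (Fin n) K)) :
    Subalgebra K (MvPolynomial (Fin n) K) where
  carrier := {p | ∀ g : G, φ g p = p}
  mul_mem' := fun ha hb g => by rw [map_mul, ha g, hb g]
  one_mem' := fun g => map_one (φ g)
  add_mem' := fun ha hb g => by rw [map_add, ha g, hb g]
  zero_mem' := fun g => map_zero (φ g)
  algebraMap_mem' := fun r g => (φ g).commutes r

/-! The Reynolds operator `Rey` is an `R^G`-linear projection of `R` onto `R^G`. For an ideal `I` of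
`R^G` it maps `IR` into `I · R^G = I` by linearity, and it fixes the invariant elements of `IR`;
hence `IR ∩ R^G ⊆ I`. -/

section Purity

variable {A B : Type*} [CommSemiring A] [CommSemiring B] [Algebra A B] [FaithfulSMul A B]

theorem comap_map_eq_self_of_isProj_one {f : B →ₗ[A] B}
    (hf : LinearMap.IsProj (1 : Submodule A B) f) (I : Ideal A) :
    (I.map (algebraMap A B)).comap (algebraMap A B) = I := by
  refine le_antisymm (fun a ha ↦ ?_) Ideal.le_comap_map
  have ha_mem : algebraMap A B a ∈ I • (⊤ : Submodule A B) := by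
    rwa [Ideal.smul_top_eq_map]
  have hfa : f (algebraMap A B a) = algebraMap A B a :=
    hf.map_id _ (Submodule.algebraMap_mem a)
  have hf_map : (I • (⊤ : Submodule A B)).map f ≤ Submodule.map (Algebra.linearMap A B) I :=
    calc (I • (⊤ : Submodule A B)).map f
      _ = I • (⊤ : Submodule A B).map f := Submodule.map_smul'' ..
      _ ≤ I • (1 : Submodule A B) :=
        smul_mono_right I (Submodule.map_le_iff_le_comap.2 fun b _ ↦ hf.map_mem b)
      _ = Submodule.map (Algebra.linearMap A B) I := by
        rw [Submodule.one_eq_range, LinearMap.range_eq_map, ← Submodule.map_smul'',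
          smul_eq_mul, Ideal.mul_top]
  obtain ⟨a', ha', h⟩ := hf_map (Submodule.mem_map_of_mem ha_mem)
  rwa [← FaithfulSMul.algebraMap_injective A B (h.trans hfa)]

end Purity

section InvariantExtension

variable (A B G : Type*) [CommRing A] [CommRing B] [Algebra A B] [Group G]
  [MulSemiringAction G B] [SMulCommClass G A B] [Algebra.IsInvariant A B G]

theorem invariants_ofDistribMulAction_eq_one :
    (Representation.ofDistribMulAction A G B).invariants = 1 := by
  ext b
  rw [Representation.mem_invariants, Submodule.mem_one]
  constructor
  · exact Algebra.IsInvariant.isInvariant b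
  · rintro ⟨a, rfl⟩ g
    exact smul_algebraMap g a

variable {A} [FaithfulSMul A B] [Fintype G]

-- `B` is a representation of `G` over the invariant ring `A` itself, so that its averaging map is
-- the Reynolds operator together with its `A`-linearity.
theorem comap_map_eq_self_of_isInvariant (hG : IsUnit (Fintype.card G : A)) (I : Ideal A) :
    (I.map (algebraMap A B)).comap (algebraMap A B) = I := by
  let := hG.invertible
  have reynolds_isProj := (Representation.ofDistribMulAction A G B).isProj_averageMap
  rw [invariants_ofDistribMulAction_eq_one] at reynolds_isProj
  exact comap_map_eq_self_of_isProj_one reynolds_isProj I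

end InvariantExtension

theorem isUnit_natCast_of_not_ringChar_dvd {K A : Type*} [DivisionRing K] [Semiring A]
    (f : K →+* A) {m : ℕ} (hm : ¬ringChar K ∣ m) : IsUnit (m : A) := by
  have hmK : IsUnit (m : K) := isUnit_iff_ne_zero.2 fun h ↦ hm (ringChar.dvd h)
  simpa only [map_natCast] using hmK.map f

theorem contraction_of_span_eq_span_general {k R G : Type*} [CommRing k] [CommRing R]
    [Algebra k R] [Group G] [Fintype G] (φ : G →* (R ≃ₐ[k] R)) {A : Subalgebra k R}
    (hA : ∀ r, r ∈ A ↔ ∀ g, φ g r = r) (hG : IsUnit (Fintype.card G : A)) (S : Set A) :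
    Ideal.comap A.val (Ideal.span (A.val '' S)) = Ideal.span S := by
  let := MulSemiringAction.compHom R φ
  have smul_def (g : G) (r : R) : g • r = φ g r := rfl
  have : SMulCommClass G A R := ⟨fun g a r ↦ by
    simp only [smul_def, Subalgebra.smul_def, smul_eq_mul, map_mul, (hA a).1 a.2 g]⟩
  have : Algebra.IsInvariant A R G := ⟨fun r hr ↦ ⟨⟨r, (hA r).2 hr⟩, rfl⟩⟩
  rw [← Ideal.map_span]
  exact comap_map_eq_self_of_isInvariant R G hG (Ideal.span S)

/-- In the non-modular case, for any set `S ⊆ R^G` of invariant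
polynomials, the contraction to `R^G` of the ideal of `R` generated by `S` equals the
ideal of `R^G` generated by `S`:  `⟨S⟩_R ∩ R^G = ⟨S⟩_{R^G}`. -/
theorem contraction_of_span_eq_span {n : ℕ} {K : Type*} [Field K]
    {G : Type*} [Group G] [Fintype G]
    (φ : G →* (MvPolynomial (Fin n) K ≃ₐ[K] MvPolynomial (Fin n) K))
    (hnm : ¬ (ringChar K ∣ Fintype.card G))
    (S : Set (invariants φ)) :
    Ideal.comap (invariants φ).val
        (Ideal.span ((invariants φ).val '' S)) = Ideal.span S := by
  exact contraction_of_span_eq_span_general φ (fun _ ↦ Iff.rfl)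
    (isUnit_natCast_of_not_ringChar_dvd (algebraMap K (invariants φ)) hnm) S
end

section
/- Let K be a field, R = K[x_1, …, x_n], and G a finite group acting on R by degree-preserving K-algebra automorphisms (e.g., linearly on the variables), with char K not dividing |G|. Let d ≥ 1 and let S ⊆ R^G be a set of homogeneous invariant non-constant polynomials such that R^G_{d'} ⊆ ⟨⟨S⟩⟩ for all d' < d, where R^G_{d'} is the set of homogeneous invariants of degree d'. Then for every homogeneous invariant b of degree d, one has b ∈ ⟨⟨S⟩⟩ if and only if b ∈ ⟨S⟩. -/
open MvPolynomial

/-!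
Modulo the ideal `⟨S⟩` every element of `⟨⟨S⟩⟩` is a constant, and `⟨S⟩` is homogeneous; hence the
elements of `⟨⟨S⟩⟩` of nonzero degree lie in `⟨S⟩`. Conversely, if `b = ∑ aᵢ sᵢ` is invariant of
degree `d` with `sᵢ ∈ S`, then each `aᵢ` may be taken homogeneous with `deg aᵢ + deg sᵢ = d`, so
`deg aᵢ < d`. Hilbert's trick of applying the Reynolds operator `ρ` turns this into
`b = ∑ ρ(aᵢ) sᵢ`, where the invariants `ρ(aᵢ)` belong to `⟨⟨S⟩⟩` by hypothesis.
-/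

section Adjoin

variable {K A : Type*} [CommSemiring K] [Semiring A] [Algebra K A] {S : Set A}

theorem exists_algebraMap_add_eq_of_mem_adjoin {a : A} (ha : a ∈ Algebra.adjoin K S) :
    ∃ r : K, ∃ y ∈ Ideal.span S, algebraMap K A r + y = a := by
  induction ha using Algebra.adjoin_induction with
  | mem s hs => exact ⟨0, s, Ideal.subset_span hs, by simp⟩
  | algebraMap r => exact ⟨r, 0, zero_mem _, add_zero _⟩
  | add _ _ _ _ hu hv =>
    obtain ⟨r, y, hy, rfl⟩ := hu
    obtain ⟨t, z, hz, rfl⟩ := hv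
    exact ⟨r + t, y + z, add_mem hy hz, by rw [map_add, add_add_add_comm]⟩
  | mul u _ _ _ hu hv =>
    obtain ⟨r, y, hy, rfl⟩ := hu
    obtain ⟨t, z, hz, rfl⟩ := hv
    refine ⟨r * t, algebraMap K A t * y + (algebraMap K A r + y) * z,
      add_mem (Ideal.mul_mem_left _ _ hy) (Ideal.mul_mem_left _ _ hz), ?_⟩
    rw [map_mul, mul_add, add_mul _ y (algebraMap K A t), Algebra.commutes t y, add_assoc]

end Adjoin

section Graded

variable {ι K A : Type*} [DecidableEq ι] [AddMonoid ι] [CommSemiring K] [Semiring A] [Algebra K A]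
  (𝒜 : ι → Submodule K A) [GradedAlgebra 𝒜] {S : Set A} {d : ι}

theorem mem_span_of_mem_adjoin_of_ne_zero (hS : ∀ s ∈ S, SetLike.IsHomogeneousElem 𝒜 s)
    (hd : d ≠ 0) {b : A} (hbd : b ∈ 𝒜 d) (hb : b ∈ Algebra.adjoin K S) : b ∈ Ideal.span S := by
  obtain ⟨r, y, hy, hry⟩ := exists_algebraMap_add_eq_of_mem_adjoin hb
  have hr : (DirectSum.decompose 𝒜 (algebraMap K A r) d : A) = 0 :=
    DirectSum.decompose_of_mem_ne 𝒜 (SetLike.algebraMap_mem_graded 𝒜 r) hd.symm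
  have hyb : (DirectSum.decompose 𝒜 y d : A) = b := by
    rw [← DirectSum.decompose_of_mem_same 𝒜 hbd, ← hry, DirectSum.decompose_add,
      DirectSum.add_apply, Submodule.coe_add, hr, zero_add]
  exact hyb ▸ Ideal.homogeneous_span 𝒜 S hS d hy

variable [Preorder ι] [AddLeftStrictMono ι] {ρ : A →ₗ[K] A}

theorem map_proj_mul_mem_adjoin
    (hlow : ∀ i < d, ∀ a ∈ 𝒜 i, ρ a ∈ Algebra.adjoin K S) {s : A} (hs : s ∈ S)
    (hρ : ∀ a, ρ (a * s) = ρ a * s) {e : ι} (he : 0 < e) (hse : s ∈ 𝒜 e) (a : A) :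
    ρ (GradedAlgebra.proj 𝒜 d (a * s)) ∈ Algebra.adjoin K S := by
  induction a using DirectSum.Decomposition.inductionOn 𝒜 with
  | zero => simp
  | @homogeneous i a =>
    have has : (a : A) * s ∈ 𝒜 (i + e) := SetLike.mul_mem_graded a.2 hse
    rw [GradedAlgebra.proj_apply]
    by_cases hid : i + e = d
    · subst hid
      rw [DirectSum.decompose_of_mem_same 𝒜 has, hρ]
      exact mul_mem (hlow i (lt_add_of_pos_right i he) a a.2) (Algebra.subset_adjoin hs)
    · rw [DirectSum.decompose_of_mem_ne 𝒜 has hid, map_zero]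
      exact zero_mem _
  | add a a' ha ha' => simpa only [add_mul, map_add] using add_mem ha ha'

theorem map_mem_adjoin_of_mem_span
    (hlow : ∀ i < d, ∀ a ∈ 𝒜 i, ρ a ∈ Algebra.adjoin K S)
    (hρ : ∀ s ∈ S, ∀ a, ρ (a * s) = ρ a * s) (hS : ∀ s ∈ S, ∃ e, 0 < e ∧ s ∈ 𝒜 e)
    {b : A} (hbd : b ∈ 𝒜 d) (hb : b ∈ Ideal.span S) : ρ b ∈ Algebra.adjoin K S := by
  suffices h : ρ (GradedAlgebra.proj 𝒜 d b) ∈ Algebra.adjoin K S by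
    rwa [GradedAlgebra.proj_apply, DirectSum.decompose_of_mem_same 𝒜 hbd] at h
  clear hbd
  induction hb using Submodule.closure_induction with
  | zero => simp
  | add x y _ _ hx hy => simpa only [map_add] using add_mem hx hy
  | smul_mem a s hs =>
    obtain ⟨e, he, hse⟩ := hS s hs
    exact map_proj_mul_mem_adjoin 𝒜 hlow hs (hρ s hs) he hse a

end Graded

section Reynolds

variable {K A G : Type*} [CommRing K] [Ring A] [Algebra K A] [Group G] [Fintype G]
  [Invertible (Fintype.card G : K)] (φ : G →* (A ≃ₐ[K] A))

/-- The Reynolds operator `a ↦ |G|⁻¹ ∑ g, φ g a` of a finite group acting by algebra automorphisms,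
which projects onto the invariants; it is the averaging map of the underlying representation. -/
noncomputable def reynoldsOperator : A →ₗ[K] A :=
  Representation.averageMap ((AlgEquiv.toLinearMapHom K A).comp φ)

theorem reynoldsOperator_apply (a : A) :
    reynoldsOperator φ a = ⅟(Fintype.card G : K) • ∑ g, φ g a := by
  simp [reynoldsOperator, GroupAlgebra.average]

theorem map_reynoldsOperator (g : G) (a : A) :
    φ g (reynoldsOperator φ a) = reynoldsOperator φ a :=
  Representation.averageMap_invariant ((AlgEquiv.toLinearMapHom K A).comp φ) a g

theorem reynoldsOperator_eq_self {a : A} (ha : ∀ g, φ g a = a) : reynoldsOperator φ a = a :=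
  Representation.averageMap_id ((AlgEquiv.toLinearMapHom K A).comp φ) a ha

theorem reynoldsOperator_mul_of_invariant {s : A} (hs : ∀ g, φ g s = s) (a : A) :
    reynoldsOperator φ (a * s) = reynoldsOperator φ a * s := by
  simp only [reynoldsOperator_apply, map_mul, hs, Finset.sum_mul, smul_mul_assoc]

theorem reynoldsOperator_mem {V : Submodule K A} (hV : ∀ g, ∀ a ∈ V, φ g a ∈ V) {a : A}
    (ha : a ∈ V) : reynoldsOperator φ a ∈ V := by
  rw [reynoldsOperator_apply]
  exact V.smul_mem _ (sum_mem fun g _ => hV g a ha)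

theorem mem_adjoin_iff_mem_span_general {ι : Type*} [DecidableEq ι] [AddMonoid ι] [Preorder ι]
    [AddLeftStrictMono ι] (𝒜 : ι → Submodule K A) [GradedAlgebra 𝒜]
    (hφ : ∀ g i, ∀ a ∈ 𝒜 i, φ g a ∈ 𝒜 i) {d : ι} (hd : d ≠ 0) {S : Set A}
    (hSinv : ∀ s ∈ S, ∀ g, φ g s = s) (hS : ∀ s ∈ S, ∃ e, 0 < e ∧ s ∈ 𝒜 e)
    (hlow : ∀ i < d, ∀ a ∈ 𝒜 i, (∀ g, φ g a = a) → a ∈ Algebra.adjoin K S)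
    {b : A} (hb : b ∈ 𝒜 d) (hbinv : ∀ g, φ g b = b) :
    b ∈ Algebra.adjoin K S ↔ b ∈ Ideal.span S := by
  refine ⟨mem_span_of_mem_adjoin_of_ne_zero 𝒜 (fun s hs => ?_) hd hb, fun hbS => ?_⟩
  · obtain ⟨e, -, hse⟩ := hS s hs
    exact ⟨e, hse⟩
  · rw [← reynoldsOperator_eq_self φ hbinv]
    refine map_mem_adjoin_of_mem_span 𝒜 (fun i hi a ha => ?_)
      (fun s hs => reynoldsOperator_mul_of_invariant φ (hSinv s hs)) hS hb hbS
    exact hlow i hi _ (reynoldsOperator_mem φ (hφ · i) ha) (map_reynoldsOperator φ · a)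

end Reynolds

theorem exists_pos_isHomogeneous_of_forall_ne_C {σ R : Type*} [CommSemiring R]
    {p : MvPolynomial σ R} (hp : ∃ e, p.IsHomogeneous e) (hpC : ∀ c, p ≠ C c) :
    ∃ e, 0 < e ∧ p.IsHomogeneous e := by
  obtain ⟨e, he⟩ := hp
  refine ⟨e, Nat.pos_of_ne_zero ?_, he⟩
  rintro rfl
  exact hpC _ (totalDegree_eq_zero_iff_eq_C.mp ((totalDegree_zero_iff_isHomogeneous σ).mpr he))

attribute [local instance] MvPolynomial.gradedAlgebra

/-- Non-modular case, degree-preserving action. If `S` is a set of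
homogeneous invariant non-constant polynomials such that every homogeneous invariant of
degree `< d` lies in the subalgebra `⟨⟨S⟩⟩` generated by `S`, then a homogeneous
invariant `b` of degree `d` lies in `⟨⟨S⟩⟩` if and only if it lies in the ideal `⟨S⟩`
of `R` generated by `S`. -/
theorem mem_adjoin_iff_mem_span {n : ℕ} {K : Type*} [Field K]
    {G : Type*} [Group G] [Fintype G]
    (φ : G →* (MvPolynomial (Fin n) K ≃ₐ[K] MvPolynomial (Fin n) K))
    (hdeg : ∀ (g : G) (e : ℕ) (p : MvPolynomial (Fin n) K),
      p.IsHomogeneous e → (φ g p).IsHomogeneous e)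
    (hnm : ¬ (ringChar K ∣ Fintype.card G))
    (d : ℕ) (hd : 1 ≤ d)
    (S : Set (MvPolynomial (Fin n) K))
    (hSinv : ∀ s ∈ S, ∀ g : G, φ g s = s)
    (hShom : ∀ s ∈ S, ∃ e, MvPolynomial.IsHomogeneous s e)
    (hSnc : ∀ s ∈ S, ∀ c : K, s ≠ MvPolynomial.C c)
    (hlow : ∀ d' < d, ∀ p : MvPolynomial (Fin n) K,
      p.IsHomogeneous d' → (∀ g : G, φ g p = p) → p ∈ Algebra.adjoin K S)
    (b : MvPolynomial (Fin n) K) (hb : b.IsHomogeneous d) (hbinv : ∀ g : G, φ g b = b) :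
    b ∈ Algebra.adjoin K S ↔ b ∈ Ideal.span S := by
  have hcard : (Fintype.card G : K) ≠ 0 := fun h => hnm (ringChar.dvd h)
  let := invertibleOfNonzero hcard
  exact mem_adjoin_iff_mem_span_general φ (homogeneousSubmodule (Fin n) K) hdeg
    (Nat.one_le_iff_ne_zero.mp hd) hSinv
    (fun s hs => exists_pos_isHomogeneous_of_forall_ne_C (hShom s hs) (hSnc s hs)) hlow hb hbinv
end

section
/- Fix a monomial order on R = K[x_1, …, x_n] over a field K, and let I ⊆ R be a homogeneous ideal. Then for every d ≥ 0, every homogeneous polynomial f ∈ R of degree d can be written as f = c + h, where h ∈ I is homogeneous of degree d and c is a K-linear combination of monomials of degree d that do not lie in lm(I) (the set of leading monomials of nonzero elements of I). -/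
open MvPolynomial
open scoped MonomialOrder

/-- `u` is the leading monomial of `p` with respect to the monomial order `m`. -/
def IsLM {n : ℕ} {K : Type*} [CommSemiring K] (m : MonomialOrder (Fin n))
    (p : MvPolynomial (Fin n) K) (u : Fin n →₀ ℕ) : Prop :=
  u ∈ p.support ∧ ∀ v ∈ p.support, v ≠ u → v ≺[m] u

/-- `lm(I)`: the set of monomials (exponent vectors) occurring as the leading monomial of
some nonzero element of the ideal `I`. -/
def lmSet {n : ℕ} {K : Type*} [Field K] (m : MonomialOrder (Fin n))
    (I : Ideal (MvPolynomial (Fin n) K)) : Set (Fin n →₀ ℕ) :=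
  {u | ∃ p ∈ I, p ≠ 0 ∧ IsLM m p u}

/-!
Divide `f` by all elements of `I` at once: the quotient part `h` lies in `I`, and no monomial of the
remainder `c` is a leading monomial of an element of `I`. Both summands may have monomials in other
degrees, but taking the component of degree `d` of `f = c + h` keeps `h` inside the homogeneous
ideal `I`, only removes monomials from `c`, and leaves `f` unchanged.
-/

section Division

variable {σ R : Type*} [CommRing R]

/-- The leading monomials of those elements of `I` whose leading coefficient is a unit. Over a field
this is `lm(I)`; over a ring, these are the leading monomials that division by `I` can cancel. -/
def unitLeadingMonomials (m : MonomialOrder σ) (I : Ideal (MvPolynomial σ R)) : Set (σ →₀ ℕ) :=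
  m.degree '' {p | p ∈ I ∧ IsUnit (m.leadingCoeff p)}

theorem exists_eq_add_forall_notMem_unitLeadingMonomials (m : MonomialOrder σ)
    (I : Ideal (MvPolynomial σ R)) (f : MvPolynomial σ R) :
    ∃ c, ∃ h ∈ I, (∀ u ∈ c.support, u ∉ unitLeadingMonomials m I) ∧ f = c + h := by
  obtain ⟨g, c, hf, -, hc⟩ := m.div_set (B := {p | p ∈ I ∧ IsUnit (m.leadingCoeff p)})
    (fun _ hp ↦ hp.2) f
  refine ⟨c, _, ?_, ?_, hf.trans (add_comm _ _)⟩
  · exact I.sum_mem fun b _ ↦ I.mul_mem_left _ b.2.1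
  · rintro _ hu ⟨p, hp, rfl⟩
    exact hc _ hu p hp le_rfl

end Division

section Grading

variable {σ R M : Type*} [AddCommMonoid M] {w : σ → M}

theorem weightedHomogeneousComponent_mem_span [CommSemiring R] {S : Set (MvPolynomial σ R)}
    (hS : ∀ s ∈ S, ∃ e, IsWeightedHomogeneous w s e) {p : MvPolynomial σ R}
    (hp : p ∈ Ideal.span S) (d : M) : weightedHomogeneousComponent w d p ∈ Ideal.span S := by
  classical
  let := weightedGradedAlgebra R w
  exact weightedHomogeneousComponent_mem_of_mem R w
    (Ideal.homogeneous_span (weightedHomogeneousSubmodule R w) S hS) hp d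

theorem homogeneous_decomposition_mod_ideal_general [CommRing R] (m : MonomialOrder σ)
    (I : Ideal (MvPolynomial σ R))
    (hI : ∃ S : Set (MvPolynomial σ R),
      (∀ s ∈ S, ∃ e, IsWeightedHomogeneous w s e) ∧ I = Ideal.span S)
    (d : M) (f : MvPolynomial σ R) (hf : IsWeightedHomogeneous w f d) :
    ∃ c h : MvPolynomial σ R,
      h ∈ I ∧ IsWeightedHomogeneous w h d ∧
      (∀ u ∈ c.support, Finsupp.weight w u = d ∧ u ∉ unitLeadingMonomials m I) ∧
      f = c + h := by
  classical
  obtain ⟨c, h, hhI, hc, hfch⟩ := exists_eq_add_forall_notMem_unitLeadingMonomials m I f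
  obtain ⟨S, hS, rfl⟩ := hI
  refine ⟨weightedHomogeneousComponent w d c, weightedHomogeneousComponent w d h,
    weightedHomogeneousComponent_mem_span hS hhI d,
    weightedHomogeneousComponent_isWeightedHomogeneous d h, fun u hu ↦ ?_, ?_⟩
  · rw [support_weightedHomogeneousComponent, Finset.mem_filter] at hu
    exact ⟨hu.2, hc u hu.1⟩
  · rw [← map_add, ← hfch, hf.weightedHomogeneousComponent_same]

end Grading

section LeadingMonomials

variable {n : ℕ} {K : Type*} (m : MonomialOrder (Fin n))

theorem isLM_iff_ne_zero_and_degree_eq [CommSemiring K] {p : MvPolynomial (Fin n) K}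
    {u : Fin n →₀ ℕ} : IsLM m p u ↔ p ≠ 0 ∧ m.degree p = u := by
  constructor
  · rintro ⟨hu, hlt⟩
    have hp : p ≠ 0 := support_nonempty.1 ⟨u, hu⟩
    by_contra! hne
    exact (hlt _ (m.degree_mem_support hp) (hne hp)).not_ge (m.le_degree hu)
  · rintro ⟨hp, rfl⟩
    exact ⟨m.degree_mem_support hp, fun v hv hne ↦
      (m.le_degree hv).lt_of_ne (m.toSyn.injective.ne hne)⟩

theorem lmSet_eq_unitLeadingMonomials [Field K] (I : Ideal (MvPolynomial (Fin n) K)) :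
    lmSet m I = unitLeadingMonomials m I := by
  ext u
  simp [lmSet, unitLeadingMonomials, isLM_iff_ne_zero_and_degree_eq, and_assoc]

end LeadingMonomials

/-- If `I` is a homogeneous ideal (i.e., generated by homogeneous
polynomials), then every homogeneous polynomial `f` of degree `d` can be written as
`f = c + h`, where `h ∈ I` is homogeneous of degree `d` and `c` is a `K`-linear
combination of monomials of degree `d` not lying in `lm(I)`. -/
theorem homogeneous_decomposition_mod_ideal {n : ℕ} {K : Type*} [Field K]
    (m : MonomialOrder (Fin n))
    (I : Ideal (MvPolynomial (Fin n) K))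
    (hI : ∃ S : Set (MvPolynomial (Fin n) K),
      (∀ s ∈ S, ∃ e, MvPolynomial.IsHomogeneous s e) ∧ I = Ideal.span S)
    (d : ℕ) (f : MvPolynomial (Fin n) K) (hf : f.IsHomogeneous d) :
    ∃ c h : MvPolynomial (Fin n) K,
      h ∈ I ∧ h.IsHomogeneous d ∧
      (∀ u ∈ c.support, u.degree = d ∧ u ∉ lmSet m I) ∧
      f = c + h := by
  simp only [Finsupp.degree_eq_weight_one, lmSet_eq_unitLeadingMonomials]
  exact homogeneous_decomposition_mod_ideal_general m I hI d f hf
end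

section
/- Let K be a field, R = K[x_1, …, x_n], and G a finite group acting on R by degree-preserving K-algebra automorphisms, with char K not dividing |G|. Let S ⊆ R^G be a set of homogeneous invariant polynomials of positive degree that generates R^G as a K-algebra. Then the ideal ⟨S⟩ of R generated by S is zero-dimensional; equivalently, the quotient ring R/⟨S⟩ is a finite-dimensional K-vector space. -/
open MvPolynomial

/-! Each `r ∈ R` is a root of the monic polynomial `∏ g, (X - g • r)`, whose coefficients are
invariant, so `R` is integral over the subalgebra generated by `S`. Modulo `⟨S⟩` that subalgebra
collapses to the scalars. Hence `R/⟨S⟩` is integral over `K`, and being a finitely generated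
`K`-algebra it is a finite `K`-module. -/

theorem map_adjoin_eq_bot_of_forall_eq_zero {K R T : Type*} [CommSemiring K] [Semiring R]
    [Algebra K R] [Semiring T] [Algebra K T] (f : R →ₐ[K] T) {S : Set R} (hf : ∀ s ∈ S, f s = 0) :
    (Algebra.adjoin K S).map f = ⊥ := by
  rw [AlgHom.map_adjoin, eq_bot_iff, Algebra.adjoin_le_iff]
  rintro _ ⟨s, hs, rfl⟩
  rw [hf s hs]
  exact zero_mem _

section IntegralQuotient

variable {K R : Type*} [CommRing K] [CommRing R] [Algebra K R]

theorem isIntegral_apply_of_subalgebra_map_eq_bot {T : Type*} [CommRing T] [Algebra K T]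
    (f : R →ₐ[K] T) {A : Subalgebra K R} (hA : A.map f = ⊥) {r : R} (hr : IsIntegral A r) :
    IsIntegral K (f r) := by
  have hfr : IsIntegral (A.map f) (f r) :=
    hr.map_of_comp_eq (f.subalgebraMap A : A →+* A.map f) (f : R →+* T) rfl
  rw [hA] at hfr
  exact isIntegral_trans (f r) hfr

theorem isIntegral_quotient_of_isIntegral_adjoin {S : Set R}
    [Algebra.IsIntegral (Algebra.adjoin K S) R] {I : Ideal R} (hSI : S ⊆ I) :
    Algebra.IsIntegral K (R ⧸ I) := by
  have hbot : (Algebra.adjoin K S).map (Ideal.Quotient.mkₐ K I) = ⊥ :=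
    map_adjoin_eq_bot_of_forall_eq_zero _ fun _ hs => Ideal.Quotient.eq_zero_iff_mem.mpr (hSI hs)
  refine ⟨fun q => ?_⟩
  obtain ⟨r, rfl⟩ := Ideal.Quotient.mkₐ_surjective K I q
  exact isIntegral_apply_of_subalgebra_map_eq_bot _ hbot (Algebra.IsIntegral.isIntegral r)

end IntegralQuotient

theorem quotient_by_generators_finiteDimensional_general {K R G : Type*} [CommRing K] [CommRing R]
    [Algebra K R] [Algebra.FiniteType K R] [Group G] [Finite G] [MulSemiringAction G R]
    {S : Set R} (hS : ∀ r : R, (∀ g : G, g • r = r) → r ∈ Algebra.adjoin K S) :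
    Module.Finite K (R ⧸ Ideal.span S) := by
  have hinv : Algebra.IsInvariant (Algebra.adjoin K S) R G := ⟨fun r hr => ⟨⟨r, hS r hr⟩, rfl⟩⟩
  have hint : Algebra.IsIntegral (Algebra.adjoin K S) R := hinv.isIntegral
  have hquot : Algebra.IsIntegral K (R ⧸ Ideal.span S) :=
    isIntegral_quotient_of_isIntegral_adjoin Ideal.subset_span
  exact Algebra.IsIntegral.finite

/-- Non-modular case, degree-preserving action. If `S ⊆ R^G` is a set
of homogeneous invariants of positive degree generating `R^G` as a `K`-algebra, then the
ideal `⟨S⟩` of `R` generated by `S` is zero-dimensional; equivalently, `R/⟨S⟩` is a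
finite-dimensional `K`-vector space. -/
theorem quotient_by_generators_finiteDimensional {n : ℕ} {K : Type*} [Field K]
    {G : Type*} [Group G] [Fintype G]
    (φ : G →* (MvPolynomial (Fin n) K ≃ₐ[K] MvPolynomial (Fin n) K))
    (hdeg : ∀ (g : G) (e : ℕ) (p : MvPolynomial (Fin n) K),
      p.IsHomogeneous e → (φ g p).IsHomogeneous e)
    (hnm : ¬ (ringChar K ∣ Fintype.card G))
    (S : Set (MvPolynomial (Fin n) K))
    (hSinv : ∀ s ∈ S, ∀ g : G, φ g s = s)
    (hShom : ∀ s ∈ S, ∃ e, 0 < e ∧ MvPolynomial.IsHomogeneous s e)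
    (hgen : Algebra.adjoin K S = invariants φ) :
    FiniteDimensional K (MvPolynomial (Fin n) K ⧸ Ideal.span S) := by
  let _ : MulSemiringAction G (MvPolynomial (Fin n) K) := MulSemiringAction.compHom _ φ
  exact quotient_by_generators_finiteDimensional_general fun _ hr => hgen.ge hr
end

section
/- Let K be a field, R = K[x_1, …, x_n], and G a finite group acting on R by degree-preserving K-algebra automorphisms, with char K not dividing |G|. Let S ⊆ R^G be a finite set of homogeneous invariant polynomials of positive degree that generates R^G as a K-algebra, and suppose that for every b ∈ S, b does not lie in the K-subalgebra ⟨⟨S ∖ {b}⟩⟩ generated by the remaining elements. Then S is a minimal generating set: every set T of homogeneous invariant polynomials of positive degree generating R^G as a K-algebra satisfies |T| ≥ |S|. -/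
open MvPolynomial

/-!
Let `B` be the algebra generated by `S`, and let `M` be its part without degree-zero component. For
`b ∈ S` of degree `d`, the degree-`d` component of a product of two elements of `M` only involves
components of lower degree of its factors, and generating these never needs `b`. Hence an
irredundant `S` is linearly independent modulo `K·1 + M²`, whereas every generating set of `B` spans
`B` modulo `K·1 + M²`.
-/

section LinearAlgebra

variable {K V : Type*} [DivisionRing K] [AddCommGroup V] [Module K V]

lemma linearIndependent_mkQ_of_notMem_span_sup {Q : Submodule K V} {S : Set V}
    (hS : ∀ b ∈ S, b ∉ Submodule.span K (S \ {b}) ⊔ Q) :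
    LinearIndependent K (fun s : S ↦ Q.mkQ s) := by
  refine linearIndependent_iff_notMem_span.2 fun b hb ↦ hS b b.2 ?_
  have himage : (fun s : S ↦ Q.mkQ s) '' (Set.univ \ {b}) ⊆ Q.mkQ '' (S \ {(b : V)}) := by
    rintro _ ⟨s, ⟨-, hsb⟩, rfl⟩
    exact ⟨s, ⟨s.2, fun h ↦ hsb (Subtype.ext h)⟩, rfl⟩
  rw [sup_comm, ← Submodule.comap_map_mkQ, Submodule.map_span]
  exact Submodule.span_mono himage hb

lemma mk_le_mk_of_subset_span_sup {Q : Submodule K V} {S T : Set V}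
    (hS : ∀ b ∈ S, b ∉ Submodule.span K (S \ {b}) ⊔ Q)
    (hST : S ⊆ (Submodule.span K T ⊔ Q : Submodule K V)) :
    Cardinal.mk S ≤ Cardinal.mk T := by
  have hli := linearIndependent_mkQ_of_notMem_span_sup hS
  have hspan : Submodule.span K (Set.range fun s : S ↦ Q.mkQ s) ≤
      Submodule.span K (Q.mkQ '' T) := by
    rw [Submodule.span_le]
    rintro _ ⟨s, rfl⟩
    rw [← Submodule.map_span, SetLike.mem_coe, ← Submodule.mem_comap, Submodule.comap_map_mkQ,
      sup_comm]
    exact hST s.2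
  calc Cardinal.mk S
      = Module.rank K (Submodule.span K (Set.range fun s : S ↦ Q.mkQ s)) := by
        rw [rank_span hli, Cardinal.mk_range_eq _ hli.injective]
    _ ≤ Module.rank K (Submodule.span K (Q.mkQ '' T)) := Submodule.rank_mono hspan
    _ ≤ Cardinal.mk (Q.mkQ '' T) := rank_span_le _
    _ ≤ Cardinal.mk T := Cardinal.mk_image_le

end LinearAlgebra

lemma adjoin_le_span_sup_one_sup_mul_self {R A : Type*} [CommRing R] [Ring A] [Algebra R A]
    {M : Submodule R A} {T : Set A}
    (hM : Subalgebra.toSubmodule (Algebra.adjoin R T) ≤ 1 ⊔ M) :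
    Subalgebra.toSubmodule (Algebra.adjoin R T) ≤ Submodule.span R T ⊔ (1 ⊔ M * M) := by
  intro x hx
  rw [Subalgebra.mem_toSubmodule] at hx
  induction hx using Algebra.adjoin_induction with
  | mem t ht => exact Submodule.mem_sup_left (Submodule.subset_span ht)
  | algebraMap r =>
    exact Submodule.mem_sup_right (Submodule.mem_sup_left (Submodule.algebraMap_mem r))
  | add x y _ _ hx hy => exact add_mem hx hy
  | mul x y hxT hyT hx hy =>
    obtain ⟨x₀, hx₀, u, hu, hxu⟩ := Submodule.mem_sup.1 (hM hxT)
    obtain ⟨y₀, hy₀, v, hv, hyv⟩ := Submodule.mem_sup.1 (hM hyT)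
    obtain ⟨a, rfl⟩ := Submodule.mem_one.1 hx₀
    obtain ⟨c, rfl⟩ := Submodule.mem_one.1 hy₀
    have hexpand : x * y = u * v + a • y + c • x - algebraMap R A (a * c) := by
      simp only [← hxu, ← hyv, Algebra.smul_def, map_mul, add_mul, mul_add, ← Algebra.commutes c]
      abel
    rw [hexpand]
    have huv : u * v ∈ Submodule.span R T ⊔ (1 ⊔ M * M) :=
      Submodule.mem_sup_right (Submodule.mem_sup_right (Submodule.mul_mem_mul hu hv))
    have hac : algebraMap R A (a * c) ∈ Submodule.span R T ⊔ (1 ⊔ M * M) :=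
      Submodule.mem_sup_right (Submodule.mem_sup_left (Submodule.algebraMap_mem _))
    exact sub_mem (add_mem (add_mem huv (Submodule.smul_mem _ a hy)) (Submodule.smul_mem _ c hx))
      hac

section Graded

open GradedAlgebra

variable {ι R A : Type*} [DecidableEq ι] [AddCommMonoid ι]

section Semiring

variable [CommSemiring R] [Semiring A] [Algebra R A] (𝒜 : ι → Submodule R A) [GradedAlgebra 𝒜]

lemma proj_mul_mem {σ : Type*} [SetLike σ A] [AddSubmonoidClass σ A] {N : σ} {d : ι} {x y : A}
    (h : ∀ i j, i + j = d → proj 𝒜 i x * proj 𝒜 j y ∈ N) : proj 𝒜 d (x * y) ∈ N := by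
  classical
  rw [proj_apply, DirectSum.decompose_mul, DirectSum.coe_mul_apply]
  exact sum_mem fun ij hij ↦ h ij.1 ij.2 (Finset.mem_filter.1 hij).2

lemma proj_eq_zero_of_mem_one {d : ι} (hd : d ≠ 0) {x : A} (hx : x ∈ (1 : Submodule R A)) :
    proj 𝒜 d x = 0 := by
  obtain ⟨r, rfl⟩ := Submodule.mem_one.1 hx
  exact DirectSum.decompose_of_mem_ne 𝒜 (SetLike.algebraMap_mem_graded 𝒜 r) hd.symm

lemma proj_eq_self_or_eq_zero {x : A} (hx : SetLike.IsHomogeneousElem 𝒜 x) (d : ι) :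
    proj 𝒜 d x = x ∨ proj 𝒜 d x = 0 := by
  obtain ⟨e, he⟩ := hx
  rcases eq_or_ne e d with rfl | hed
  · exact .inl (DirectSum.decompose_of_mem_same 𝒜 he)
  · exact .inr (DirectSum.decompose_of_mem_ne 𝒜 he hed)

lemma proj_mem_span {S : Set A} (hS : ∀ s ∈ S, SetLike.IsHomogeneousElem 𝒜 s) {x : A}
    (hx : x ∈ Submodule.span R S) (d : ι) : proj 𝒜 d x ∈ Submodule.span R S := by
  suffices Submodule.span R S ≤ (Submodule.span R S).comap (proj 𝒜 d) from this hx
  refine Submodule.span_le.2 fun s hs ↦ ?_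
  rcases proj_eq_self_or_eq_zero 𝒜 (hS s hs) d with h | h
  · simpa only [SetLike.mem_coe, Submodule.mem_comap, h] using Submodule.subset_span hs
  · simp only [SetLike.mem_coe, Submodule.mem_comap, h, zero_mem]

/-- The augmentation ideal of a subalgebra `B` of a graded algebra, consisting of the elements of
`B` without degree-zero component. It is encoded as a subspace of the ambient algebra, so that its
square is a product of submodules. -/
def augmentationSubmodule (B : Subalgebra R A) : Submodule R A :=
  Subalgebra.toSubmodule B ⊓ LinearMap.ker (proj 𝒜 0)

variable [PartialOrder ι] [CanonicallyOrderedAdd ι]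

lemma proj_zero_mem_one_of_mem_adjoin {S : Set A} (hS : ∀ s ∈ S, proj 𝒜 0 s = 0) {x : A}
    (hx : x ∈ Algebra.adjoin R S) : proj 𝒜 0 x ∈ (1 : Submodule R A) := by
  rw [← Algebra.toSubmodule_bot, Subalgebra.mem_toSubmodule]
  induction hx using Algebra.adjoin_induction with
  | mem s hs => exact hS s hs ▸ zero_mem _
  | algebraMap r =>
    rw [proj_apply, DirectSum.decompose_of_mem_same 𝒜 (SetLike.algebraMap_mem_graded 𝒜 r)]
    exact Subalgebra.algebraMap_mem _ r
  | add x y _ _ hx hy => exact map_add (proj 𝒜 0) x y ▸ add_mem hx hy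
  | mul x y _ _ hx hy => exact map_mul (GradedRing.projZeroRingHom 𝒜) x y ▸ mul_mem hx hy

lemma proj_mem_adjoin_diff_singleton {S : Set A} (hS : ∀ s ∈ S, SetLike.IsHomogeneousElem 𝒜 s)
    {b : A} {d : ι} (hb : b ∈ 𝒜 d) {x : A} (hx : x ∈ Algebra.adjoin R S) {i : ι} (hi : ¬ d ≤ i) :
    proj 𝒜 i x ∈ Algebra.adjoin R (S \ {b}) := by
  induction hx using Algebra.adjoin_induction generalizing i with
  | mem s hs =>
    rcases eq_or_ne s b with rfl | hsb
    · rw [proj_apply, DirectSum.decompose_of_mem_ne 𝒜 hb (mt le_of_eq hi)]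
      exact zero_mem _
    · rcases proj_eq_self_or_eq_zero 𝒜 (hS s hs) i with h | h <;> rw [h]
      · exact Algebra.subset_adjoin ⟨hs, hsb⟩
      · exact zero_mem _
  | algebraMap r =>
    rcases proj_eq_self_or_eq_zero 𝒜 ⟨0, SetLike.algebraMap_mem_graded 𝒜 r⟩ i with h | h <;> rw [h]
    · exact Subalgebra.algebraMap_mem _ r
    · exact zero_mem _
  | add x y _ _ hx hy => exact map_add (proj 𝒜 i) x y ▸ add_mem (hx hi) (hy hi)
  | mul x y _ _ hx hy =>
    refine proj_mul_mem 𝒜 fun j k hjk ↦ mul_mem (hx ?_) (hy ?_)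
    · exact fun hdj ↦ hi (hdj.trans (hjk ▸ le_self_add))
    · exact fun hdk ↦ hi (hdk.trans (hjk ▸ le_add_self))

lemma proj_mem_adjoin_diff_singleton_of_mem_augmentationSubmodule_mul_self
    [IsOrderedCancelAddMonoid ι] {S : Set A} (hS : ∀ s ∈ S, SetLike.IsHomogeneousElem 𝒜 s)
    {b : A} {d : ι} (hb : b ∈ 𝒜 d) {x : A}
    (hx : x ∈ augmentationSubmodule 𝒜 (Algebra.adjoin R S) *
      augmentationSubmodule 𝒜 (Algebra.adjoin R S)) :
    proj 𝒜 d x ∈ Algebra.adjoin R (S \ {b}) := by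
  induction hx using Submodule.mul_induction_on' with
  | mem_mul_mem p hp q hq =>
    refine proj_mul_mem 𝒜 fun i j hij ↦ ?_
    rcases eq_or_ne i 0 with rfl | hi
    · rw [LinearMap.mem_ker.1 hp.2, zero_mul]
      exact zero_mem _
    rcases eq_or_ne j 0 with rfl | hj
    · rw [LinearMap.mem_ker.1 hq.2, mul_zero]
      exact zero_mem _
    have hdi : ¬ d ≤ i := by rwa [← hij, add_le_iff_nonpos_right, nonpos_iff_eq_zero]
    have hdj : ¬ d ≤ j := by rwa [← hij, add_le_iff_nonpos_left, nonpos_iff_eq_zero]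
    exact mul_mem (proj_mem_adjoin_diff_singleton 𝒜 hS hb hp.1 hdi)
      (proj_mem_adjoin_diff_singleton 𝒜 hS hb hq.1 hdj)
  | add x _ y _ hx hy => exact map_add (proj 𝒜 d) x y ▸ add_mem hx hy

lemma notMem_span_diff_singleton_sup_one_sup_mul_self [IsOrderedCancelAddMonoid ι] {S : Set A}
    (hS : ∀ s ∈ S, SetLike.IsHomogeneousElem 𝒜 s) {b : A} {d : ι} (hd : d ≠ 0) (hb : b ∈ 𝒜 d)
    (hbS : b ∉ Algebra.adjoin R (S \ {b})) :
    b ∉ Submodule.span R (S \ {b}) ⊔ (1 ⊔ augmentationSubmodule 𝒜 (Algebra.adjoin R S) *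
      augmentationSubmodule 𝒜 (Algebra.adjoin R S)) := by
  intro hmem
  obtain ⟨l, hl, w, hw, hlw⟩ := Submodule.mem_sup.1 hmem
  obtain ⟨c, hc, q, hq, rfl⟩ := Submodule.mem_sup.1 hw
  have hb_eq : proj 𝒜 d l + proj 𝒜 d q = b := by
    have hproj : proj 𝒜 d b = b := DirectSum.decompose_of_mem_same 𝒜 hb
    rwa [← hlw, map_add, map_add, proj_eq_zero_of_mem_one 𝒜 hd hc, zero_add, hlw] at hproj
  suffices proj 𝒜 d l + proj 𝒜 d q ∈ Algebra.adjoin R (S \ {b}) from hbS (hb_eq ▸ this)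
  refine add_mem ?_ ?_
  · exact Algebra.span_le_adjoin R _ (proj_mem_span 𝒜 (fun s hs ↦ hS s hs.1) hl d)
  · exact proj_mem_adjoin_diff_singleton_of_mem_augmentationSubmodule_mul_self 𝒜 hS hb hq

end Semiring

lemma adjoin_le_one_sup_augmentationSubmodule [CommRing R] [Ring A] [Algebra R A]
    (𝒜 : ι → Submodule R A) [GradedAlgebra 𝒜] [PartialOrder ι] [CanonicallyOrderedAdd ι] {S : Set A}
    (hS : ∀ s ∈ S, proj 𝒜 0 s = 0) :
    Subalgebra.toSubmodule (Algebra.adjoin R S) ≤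
      1 ⊔ augmentationSubmodule 𝒜 (Algebra.adjoin R S) := by
  intro x hx
  have hx₀ := proj_zero_mem_one_of_mem_adjoin 𝒜 hS hx
  have hproj : proj 𝒜 0 (proj 𝒜 0 x) = proj 𝒜 0 x :=
    DirectSum.decompose_of_mem_same 𝒜 (SetLike.coe_mem _)
  refine Submodule.mem_sup.2 ⟨proj 𝒜 0 x, hx₀, x - proj 𝒜 0 x, ⟨sub_mem hx ?_, ?_⟩, by abel⟩
  · exact Submodule.one_le.2 (one_mem (Algebra.adjoin R S)) hx₀
  · rw [SetLike.mem_coe, LinearMap.mem_ker, map_sub, hproj, sub_self]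

end Graded

theorem minimal_generating_set_card_le_general {ι K A : Type*} [DecidableEq ι] [AddCommMonoid ι]
    [PartialOrder ι] [CanonicallyOrderedAdd ι] [IsOrderedCancelAddMonoid ι]
    [Field K] [Ring A] [Algebra K A] (𝒜 : ι → Submodule K A) [GradedAlgebra 𝒜] {S T : Set A}
    (hS : ∀ s ∈ S, ∃ d, 0 < d ∧ s ∈ 𝒜 d)
    (hSmin : ∀ b ∈ S, b ∉ Algebra.adjoin K (S \ {b}))
    (hST : Algebra.adjoin K S = Algebra.adjoin K T) :
    Cardinal.mk S ≤ Cardinal.mk T := by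
  have hhom : ∀ s ∈ S, SetLike.IsHomogeneousElem 𝒜 s := fun s hs ↦
    let ⟨d, _, hd⟩ := hS s hs
    ⟨d, hd⟩
  have hzero : ∀ s ∈ S, GradedAlgebra.proj 𝒜 0 s = 0 := fun s hs ↦
    let ⟨_, hpos, hd⟩ := hS s hs
    DirectSum.decompose_of_mem_ne 𝒜 hd hpos.ne'
  let M := augmentationSubmodule 𝒜 (Algebra.adjoin K S)
  have hindep : ∀ b ∈ S, b ∉ Submodule.span K (S \ {b}) ⊔ (1 ⊔ M * M) := fun b hb ↦
    let ⟨_, hpos, hd⟩ := hS b hb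
    notMem_span_diff_singleton_sup_one_sup_mul_self 𝒜 hhom hpos.ne' hd (hSmin b hb)
  have hspan : Subalgebra.toSubmodule (Algebra.adjoin K T) ≤ Submodule.span K T ⊔ (1 ⊔ M * M) :=
    adjoin_le_span_sup_one_sup_mul_self (hST ▸ adjoin_le_one_sup_augmentationSubmodule 𝒜 hzero)
  exact mk_le_mk_of_subset_span_sup hindep fun s hs ↦ hspan (hST ▸ Algebra.subset_adjoin hs)

/-- Non-modular case, degree-preserving action. If `S` is a finite set
of homogeneous invariants of positive degree which generates `R^G` as a `K`-algebra and
no element of `S` lies in the subalgebra generated by the remaining elements, then `S` is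
a minimal generating set: every finite set `T` of homogeneous invariants of positive
degree generating `R^G` as a `K`-algebra satisfies `|T| ≥ |S|`. -/
theorem minimal_generating_set_card_le {n : ℕ} {K : Type*} [Field K]
    {G : Type*} [Group G] [Fintype G]
    (φ : G →* (MvPolynomial (Fin n) K ≃ₐ[K] MvPolynomial (Fin n) K))
    (hdeg : ∀ (g : G) (e : ℕ) (p : MvPolynomial (Fin n) K),
      p.IsHomogeneous e → (φ g p).IsHomogeneous e)
    (hnm : ¬ (ringChar K ∣ Fintype.card G))
    (S : Finset (MvPolynomial (Fin n) K))
    (hSinv : ∀ s ∈ S, ∀ g : G, φ g s = s)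
    (hShom : ∀ s ∈ S, ∃ e, 0 < e ∧ MvPolynomial.IsHomogeneous s e)
    (hSgen : Algebra.adjoin K (S : Set (MvPolynomial (Fin n) K)) = invariants φ)
    (hSmin : ∀ b ∈ S,
      b ∉ Algebra.adjoin K ((S : Set (MvPolynomial (Fin n) K)) \ {b})) :
    ∀ T : Finset (MvPolynomial (Fin n) K),
      (∀ t ∈ T, ∀ g : G, φ g t = t) →
      (∀ t ∈ T, ∃ e, 0 < e ∧ MvPolynomial.IsHomogeneous t e) →
      Algebra.adjoin K (T : Set (MvPolynomial (Fin n) K)) = invariants φ →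
      S.card ≤ T.card := by
  intro T _ _ hTgen
  let _ : GradedAlgebra (homogeneousSubmodule (Fin n) K) := gradedAlgebra
  simpa using minimal_generating_set_card_le_general (homogeneousSubmodule (Fin n) K)
    hShom hSmin (hSgen.trans hTgen.symm)
end
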